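/- Let f be a locally integrable function on the open unit disc satisfying the VWMO condition. Then the function f − f̂ satisfies the vanishing averaging condition (4a): lim_{|z|→1} (1/|B(z)|) · sup_{ζ∈B(z)} |∫_{B(z,ζ)} (f(ξ) − f̂(ξ)) dA(ξ)| = 0. -/

import Mathlib

open MeasureTheory Set

noncomputable section

/-- The normalized area measure on the plane: planar Lebesgue measure divided by `π`. -/
def dA : Measure ℂ := (ENNReal.ofReal Real.pi)⁻¹ • volume

/-- The open unit disc `𝔻`. -/
def unitDisc : Set ℂ := {z : ℂ | ‖z‖ < 1}

/-- The argument `θ` of `z`, normalized to lie in `[0, 2π)`. -/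
def theta (z : ℂ) : ℝ := toIcoMod Real.two_pi_pos 0 (Complex.arg z)

/-- The angle of `ζ`, normalized to lie in `[theta z, theta z + 2π)`;
for `ζ ∈ B(z)` this is the angle `θ̃ ∈ [θ, θ + π(1-r)]` of the paper's convention. -/
def angFrom (z ζ : ℂ) : ℝ := toIcoMod Real.two_pi_pos (theta z) (Complex.arg ζ)

/-- The polar rectangle `{ρ e^{iφ} : r₁ ≤ ρ ≤ r₂, φ₁ ≤ φ ≤ φ₂}`. -/
def polarRect (r₁ r₂ φ₁ φ₂ : ℝ) : Set ℂ :=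
  {w : ℂ | ∃ ρ φ : ℝ, r₁ ≤ ρ ∧ ρ ≤ r₂ ∧ φ₁ ≤ φ ∧ φ ≤ φ₂ ∧
    w = (ρ : ℂ) * Complex.exp ((φ : ℂ) * Complex.I)}

/-- The set `B(z)` for `z = r e^{iθ} ∈ 𝔻`. -/
def Bz (z : ℂ) : Set ℂ :=
  polarRect ‖z‖ (1 - (1 - ‖z‖) / 2) (theta z) (theta z + Real.pi * (1 - ‖z‖))

/-- The set `B(z, ζ)` for `ζ ∈ B(z)`. -/
def Bzz (z ζ : ℂ) : Set ℂ := polarRect ‖z‖ ‖ζ‖ (theta z) (angFrom z ζ)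

/-- The set `B(ζ₁, ζ₂)` for points `ζ₁ ≾ ζ₂` of `B(z)`. -/
def Bsub (z ζ₁ ζ₂ : ℂ) : Set ℂ := polarRect ‖ζ₁‖ ‖ζ₂‖ (angFrom z ζ₁) (angFrom z ζ₂)

/-- The relation `ζ₁ ≾ ζ₂` for points of `B(z)`: `ρ₁ ≤ ρ₂` and `φ₁ ≤ φ₂`. -/
def precSim (z ζ₁ ζ₂ : ℂ) : Prop := ‖ζ₁‖ ≤ ‖ζ₂‖ ∧ angFrom z ζ₁ ≤ angFrom z ζ₂

/-- The average `f̂_K = (1/|K|) ∫_K f dA` of `f` over a set `K`. -/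
def avgOn (f : ℂ → ℂ) (K : Set ℂ) : ℂ := ((dA K).toReal)⁻¹ • ∫ w in K, f w ∂dA

/-- The average function `f̂(z) = f̂_{B(z)}`. -/
def avg (f : ℂ → ℂ) (z : ℂ) : ℂ := avgOn f (Bz z)

/-- The quantity `(1/|B(z)|) |∫_{B(z,ζ)} (f(ξ) - f̂(z)) dA(ξ)|`. -/
def wQuot (f : ℂ → ℂ) (z ζ : ℂ) : ℝ :=
  ((dA (Bz z)).toReal)⁻¹ * ‖∫ ξ in Bzz z ζ, (f ξ - avg f z) ∂dA‖

/-- The BWMO condition: `‖f‖_BWMO < ∞`. -/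
def IsBWMO (f : ℂ → ℂ) : Prop := ∃ C : ℝ, ∀ z ∈ unitDisc, ∀ ζ ∈ Bz z, wQuot f z ζ ≤ C

/-- The BWMO seminorm `‖f‖_BWMO`. -/
def bwmoNorm (f : ℂ → ℂ) : ℝ :=
  sSup {c : ℝ | ∃ z ∈ unitDisc, ∃ ζ ∈ Bz z, c = wQuot f z ζ}

/-- The VWMO condition:
`(1/|B(z)|) sup_{ζ ∈ B(z)} |∫_{B(z,ζ)} (f - f̂(z)) dA| → 0` as `|z| → 1`. -/
def IsVWMO (f : ℂ → ℂ) : Prop :=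
  ∀ ε > (0:ℝ), ∃ r₀ < (1:ℝ), ∀ z ∈ unitDisc, r₀ ≤ ‖z‖ → ∀ ζ ∈ Bz z, wQuot f z ζ ≤ ε

/-- The Bergman-metric disc `D(z,1)` of radius `1` centered at `z`. -/
def Dball (z : ℂ) : Set ℂ :=
  {w : ℂ | ‖w‖ < 1 ∧ ‖(z - w) / (1 - (starRingEnd ℂ) w * z)‖ < Real.tanh 1}

/-- The hyperbolic average `f̂₁(z) = (1/|D(z,1)|) ∫_{D(z,1)} f dA` of a real-valued `f`. -/
def avg1 (f : ℂ → ℝ) (z : ℂ) : ℝ := ((dA (Dball z)).toReal)⁻¹ * ∫ w in Dball z, f w ∂dA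

/-- The mean oscillation `(1/|D(z,1)|) ∫_{D(z,1)} |f - f̂₁(z)| dA` of a real-valued `f`. -/
def meanOsc1 (f : ℂ → ℝ) (z : ℂ) : ℝ :=
  ((dA (Dball z)).toReal)⁻¹ * ∫ ξ in Dball z, |f ξ - avg1 f z| ∂dA

/-- The Berezin transform `f̃(z) = ∫_𝔻 f(w) |k_z(w)|² dA(w)`,
where `k_z(w) = (1-|z|²)/(1-w z̄)²`. -/
def berezin (f : ℂ → ℂ) (z : ℂ) : ℂ :=
  ∫ w in unitDisc, f w * ((((1 - ‖z‖ ^ 2) ^ 2 / ‖1 - w * (starRingEnd ℂ) z‖ ^ 4 : ℝ)) : ℂ) ∂dA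

/-- The example symbol of Section 4:
`f(r e^{iθ}) = (1/(r (1-r)^{b-β})) sin(1/(1-r)^b)` for `r ≥ 1/2`, and `1` for `r < 1/2`. -/
def fEx (b β : ℝ) (z : ℂ) : ℝ :=
  if ‖z‖ < 1 / 2 then 1
  else (1 / (‖z‖ * (1 - ‖z‖) ^ (b - β))) * Real.sin (1 / (1 - ‖z‖) ^ b)

end

lemma polar_inj {ρ ρ' φ φ' : ℝ} (h : 0 < ρ) (h' : 0 < ρ') (hlt : |φ - φ'| < 2 * Real.pi)
    (he : (ρ : ℂ) * Complex.exp ((φ : ℂ) * Complex.I)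
      = (ρ' : ℂ) * Complex.exp ((φ' : ℂ) * Complex.I)) : ρ = ρ' ∧ φ = φ' := by
  have h1 : ρ = ρ' := by
    have := congrArg norm he
    simpa [Complex.norm_exp_ofReal_mul_I, abs_of_pos h, abs_of_pos h'] using this
  subst h1
  refine ⟨rfl, ?_⟩
  have hne : (ρ : ℂ) ≠ 0 := by exact_mod_cast h.ne'
  have h2 := mul_left_cancel₀ hne he
  obtain ⟨n, hn⟩ := Complex.exp_eq_exp_iff_exists_int.1 h2
  have h3 : (φ : ℂ) = φ' + n * (2 * Real.pi) := by
    apply mul_right_cancel₀ Complex.I_ne_zero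
    rw [hn]; ring
  have h4 : φ = φ' + n * (2 * Real.pi) := by exact_mod_cast h3
  have h5 : |(n : ℝ)| < 1 := by
    rw [h4, add_sub_cancel_left, abs_mul, abs_of_pos Real.two_pi_pos] at hlt
    have := Real.two_pi_pos
    nlinarith
  have h6 : n = 0 := by
    have : |n| < 1 := by exact_mod_cast h5
    exact Int.abs_lt_one_iff.1 this
  simpa [h6] using h4

lemma polarRect_eq_image (a b α β : ℝ) : polarRect a b α β =
    (fun p : ℝ × ℝ => (p.1 : ℂ) * Complex.exp ((p.2 : ℂ) * Complex.I)) ''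
      (Icc a b ×ˢ Icc α β) := by
  ext w
  constructor
  · rintro ⟨ρ, φ, h1, h2, h3, h4, rfl⟩
    exact ⟨(ρ, φ), ⟨⟨h1, h2⟩, ⟨h3, h4⟩⟩, rfl⟩
  · rintro ⟨⟨ρ, φ⟩, ⟨⟨h1, h2⟩, ⟨h3, h4⟩⟩, rfl⟩
    exact ⟨ρ, φ, h1, h2, h3, h4, rfl⟩

lemma polarRect_isCompact (a b α β : ℝ) : IsCompact (polarRect a b α β) := by
  rw [polarRect_eq_image]
  exact (isCompact_Icc.prod isCompact_Icc).image (by fun_prop)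

lemma polarRect_meas (a b α β : ℝ) : MeasurableSet (polarRect a b α β) :=
  (polarRect_isCompact a b α β).measurableSet

lemma polarRect_volume {a b α β : ℝ} (ha : 0 < a) (hab : a ≤ b) (hαβ : α ≤ β)
    (hw : β - α < 2 * Real.pi) :
    volume (polarRect a b α β) = ENNReal.ofReal ((β - α) * (b ^ 2 - a ^ 2) / 2) := by
  have hS : MeasurableSet (Icc a b ×ˢ Icc α β) := measurableSet_Icc.prod measurableSet_Icc
  have h1 : polarRect a b α β = Complex.measurableEquivRealProd ⁻¹'
      (polarCoord.symm '' (Icc a b ×ˢ Icc α β)) := by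
    rw [polarRect_eq_image, ← Complex.measurableEquivRealProd.image_symm, Set.image_image]
    apply Set.image_congr
    intro p hp
    rw [MeasurableEquiv.eq_symm_apply] 
    simp [Complex.measurableEquivRealProd_apply, polarCoord, Complex.exp_ofReal_mul_I_re,
      Complex.exp_ofReal_mul_I_im]
  rw [h1, Complex.volume_preserving_equiv_real_prod.measure_preimage_equiv]
  rw [← lintegral_abs_det_fderiv_eq_addHaar_image volume hS
    (fun p _ => (hasFDerivAt_polarCoord_symm p).hasFDerivWithinAt)]
  · simp_rw [det_fderivPolarCoordSymm]
    rw [← ofReal_integral_eq_lintegral_ofReal]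
    · congr 1
      have : ∫ x in Icc a b ×ˢ Icc α β, |x.1| = ∫ x in Icc a b ×ˢ Icc α β, x.1 * 1 := by
        apply setIntegral_congr_fun hS
        rintro ⟨x, y⟩ ⟨hx, hy⟩
        simp only [mul_one]
        exact abs_of_pos (ha.trans_le hx.1)
      rw [this, Measure.volume_eq_prod, setIntegral_prod_mul (fun x : ℝ => x) (fun _ => (1:ℝ)),
        integral_Icc_eq_integral_Ioc, ← intervalIntegral.integral_of_le hab, integral_id]
      simp [hαβ]
      ring
    · exact (ContinuousOn.integrableOn_compact (isCompact_Icc.prod isCompact_Icc) (by fun_prop))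
    · exact Filter.Eventually.of_forall fun x => abs_nonneg _
  · rintro ⟨x, y⟩ ⟨hx, hy⟩ ⟨x', y'⟩ ⟨hx', hy'⟩ he
    simp only [mem_Icc] at hx hy hx' hy'
    have := @polar_inj x x' y y' (by linarith) (by linarith)
      (by rw [abs_lt]; constructor <;> linarith) (by
        have e1 := congrArg Prod.fst he
        have e2 := congrArg Prod.snd he
        simp [polarCoord] at e1 e2
        apply Complex.ext <;> simp [Complex.exp_ofReal_mul_I_re,
          Complex.exp_ofReal_mul_I_im, e1, e2])
    rw [this.1, this.2]

lemma dA_finite {a b α β : ℝ} : dA (polarRect a b α β) ≠ ⊤ := by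
  unfold dA
  rw [Measure.smul_apply, smul_eq_mul]
  exact ENNReal.mul_ne_top (by simp [Real.pi_pos]) (polarRect_isCompact a b α β).measure_lt_top.ne

lemma polarRect_area {a b α β : ℝ} (ha : 0 < a) (hab : a ≤ b) (hαβ : α ≤ β)
    (hw : β - α < 2 * Real.pi) :
    (dA (polarRect a b α β)).toReal = (β - α) * (b ^ 2 - a ^ 2) / 2 / Real.pi := by
  unfold dA
  rw [Measure.smul_apply, smul_eq_mul, polarRect_volume ha hab hαβ hw, ENNReal.toReal_mul,
    ENNReal.toReal_inv, ENNReal.toReal_ofReal Real.pi_pos.le, ENNReal.toReal_ofReal]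
  · ring
  · have : 0 ≤ b ^ 2 - a ^ 2 := by nlinarith
    have : 0 ≤ β - α := by linarith
    positivity

lemma polarRect_null {a b α β : ℝ} (ha : 0 < a) (hab : a ≤ b) (hαβ : α ≤ β)
    (hw : β - α < 2 * Real.pi) (h : a = b ∨ α = β) : dA (polarRect a b α β) = 0 := by
  have := polarRect_area ha hab hαβ hw
  have h2 : (dA (polarRect a b α β)).toReal = 0 := by
    rw [this]; rcases h with rfl | rfl <;> simp
  exact ((ENNReal.toReal_eq_zero_iff _).1 h2).resolve_right dA_finite

lemma polarRect_mono {a b α β a' b' α' β' : ℝ} (h1 : a' ≤ a) (h2 : b ≤ b') (h3 : α' ≤ α)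
    (h4 : β ≤ β') : polarRect a b α β ⊆ polarRect a' b' α' β' := by
  rintro w ⟨ρ, φ, h5, h6, h7, h8, rfl⟩
  exact ⟨ρ, φ, by linarith, by linarith, by linarith, by linarith, rfl⟩

lemma int_split_r {g : ℂ → ℂ} {a b c α β : ℝ} (ha : 0 < a) (hab : a ≤ b) (hbc : b ≤ c)
    (hαβ : α ≤ β) (hw : β - α < 2 * Real.pi) (hg : IntegrableOn g (polarRect a c α β) dA) :
    ∫ w in polarRect a c α β, g w ∂dA =
      (∫ w in polarRect a b α β, g w ∂dA) + ∫ w in polarRect b c α β, g w ∂dA := by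
  have hu : polarRect a c α β = polarRect a b α β ∪ polarRect b c α β := by
    apply Subset.antisymm
    · rintro w ⟨ρ, φ, h5, h6, h7, h8, rfl⟩
      rcases le_total ρ b with h | h
      · exact Or.inl ⟨ρ, φ, h5, h, h7, h8, rfl⟩
      · exact Or.inr ⟨ρ, φ, h, h6, h7, h8, rfl⟩
    · exact union_subset (polarRect_mono le_rfl hbc le_rfl le_rfl)
        (polarRect_mono hab le_rfl le_rfl le_rfl)
  have hd : AEDisjoint dA (polarRect a b α β) (polarRect b c α β) := by
    refine measure_mono_null ?_ (polarRect_null (ha.trans_le hab) le_rfl hαβ hw (Or.inl rfl))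
    rintro w ⟨⟨ρ, φ, h1, h2, h3, h4, rfl⟩, ⟨ρ', φ', h5, h6, h7, h8, he⟩⟩
    obtain ⟨e1, e2⟩ := polar_inj (by linarith) (by linarith)
      (by rw [abs_lt]; constructor <;> linarith) he
    exact ⟨ρ, φ, by linarith, by linarith, h3, h4, rfl⟩
  rw [hu] at hg ⊢
  exact setIntegral_union₀ hd (polarRect_meas _ _ _ _).nullMeasurableSet
    (hg.mono_set subset_union_left) (hg.mono_set subset_union_right)

lemma int_split_a {g : ℂ → ℂ} {a b α β γ : ℝ} (ha : 0 < a) (hab : a ≤ b) (hαβ : α ≤ β)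
    (hβγ : β ≤ γ) (hw : γ - α < 2 * Real.pi) (hg : IntegrableOn g (polarRect a b α γ) dA) :
    ∫ w in polarRect a b α γ, g w ∂dA =
      (∫ w in polarRect a b α β, g w ∂dA) + ∫ w in polarRect a b β γ, g w ∂dA := by
  have hu : polarRect a b α γ = polarRect a b α β ∪ polarRect a b β γ := by
    apply Subset.antisymm
    · rintro w ⟨ρ, φ, h5, h6, h7, h8, rfl⟩
      rcases le_total φ β with h | h
      · exact Or.inl ⟨ρ, φ, h5, h6, h7, h, rfl⟩
      · exact Or.inr ⟨ρ, φ, h5, h6, h, h8, rfl⟩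
    · exact union_subset (polarRect_mono le_rfl le_rfl le_rfl hβγ)
        (polarRect_mono le_rfl le_rfl hαβ le_rfl)
  have hd : AEDisjoint dA (polarRect a b α β) (polarRect a b β γ) := by
    refine measure_mono_null ?_ (polarRect_null ha hab le_rfl
      (by simpa using Real.pi_pos) (Or.inr (rfl : β = β)))
    rintro w ⟨⟨ρ, φ, h1, h2, h3, h4, rfl⟩, ⟨ρ', φ', h5, h6, h7, h8, he⟩⟩
    obtain ⟨e1, e2⟩ := polar_inj (by linarith) (by linarith)
      (by rw [abs_lt]; constructor <;> linarith) he
    exact ⟨ρ, φ, h1, h2, by linarith, by linarith, rfl⟩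
  rw [hu] at hg ⊢
  exact setIntegral_union₀ hd (polarRect_meas _ _ _ _).nullMeasurableSet
    (hg.mono_set subset_union_left) (hg.mono_set subset_union_right)

/-- Polar point. -/
noncomputable def pol (r θ : ℝ) : ℂ := (r : ℂ) * Complex.exp ((θ : ℂ) * Complex.I)

/-- The box `B` in polar coordinates, with arbitrary lift of the angle. -/
def Bp (r θ : ℝ) : Set ℂ := polarRect r (1 - (1 - r) / 2) θ (θ + Real.pi * (1 - r))

lemma pol_shift (r θ : ℝ) (n : ℤ) : pol r (θ + n * (2 * Real.pi)) = pol r θ := by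
  unfold pol
  congr 1
  rw [Complex.exp_eq_exp_iff_exists_int]
  exact ⟨n, by push_cast; ring⟩

lemma polarRect_shift (a b α β : ℝ) (n : ℤ) :
    polarRect a b (α + n * (2 * Real.pi)) (β + n * (2 * Real.pi)) = polarRect a b α β := by
  ext w
  constructor
  · rintro ⟨ρ, φ, h1, h2, h3, h4, rfl⟩
    refine ⟨ρ, φ + (-n : ℤ) * (2 * Real.pi), h1, h2, ?_, ?_, (pol_shift ρ φ (-n)).symm⟩ <;>
      push_cast <;> linarith
  · rintro ⟨ρ, φ, h1, h2, h3, h4, rfl⟩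
    exact ⟨ρ, φ + n * (2 * Real.pi), h1, h2, by linarith, by linarith, (pol_shift ρ φ n).symm⟩

lemma norm_pol {r : ℝ} (hr : 0 ≤ r) (θ : ℝ) : ‖pol r θ‖ = r := by
  simp [pol, Complex.norm_exp_ofReal_mul_I, abs_of_nonneg hr]

lemma arg_pol {r : ℝ} (hr : 0 < r) (θ : ℝ) :
    ∃ n : ℤ, Complex.arg (pol r θ) = θ + n * (2 * Real.pi) := by
  unfold pol
  rw [Complex.arg_real_mul _ hr, Complex.arg_exp_mul_I]
  refine ⟨-toIocDiv Real.two_pi_pos (-Real.pi) θ, ?_⟩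
  rw [toIocMod, zsmul_eq_mul]
  push_cast
  ring

lemma theta_pol {r : ℝ} (hr : 0 < r) (θ : ℝ) :
    ∃ n : ℤ, theta (pol r θ) = θ + n * (2 * Real.pi) := by
  obtain ⟨n, hn⟩ := arg_pol hr θ
  refine ⟨n - toIcoDiv Real.two_pi_pos 0 (Complex.arg (pol r θ)), ?_⟩
  unfold theta
  rw [toIcoMod]
  push_cast
  rw [zsmul_eq_mul]
  linarith

lemma pol_theta (z : ℂ) : pol ‖z‖ (theta z) = z := by
  have : theta z = Complex.arg z +
      ((-toIcoDiv Real.two_pi_pos 0 (Complex.arg z) : ℤ) : ℝ) * (2 * Real.pi) := by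
    unfold theta
    rw [toIcoMod, zsmul_eq_mul]
    push_cast; ring
  rw [this, pol_shift]
  exact Complex.norm_mul_exp_arg_mul_I z

lemma Bz_pol {r : ℝ} (hr : 0 < r) (θ : ℝ) : Bz (pol r θ) = Bp r θ := by
  obtain ⟨n, hn⟩ := theta_pol hr θ
  unfold Bz Bp
  rw [norm_pol hr.le, hn, ← polarRect_shift _ _ θ _ n]
  congr 1
  ring

lemma Bzz_pol {r ρ θ φ : ℝ} (hr : 0 < r) (hρ : 0 < ρ) (h1 : θ ≤ φ)
    (h2 : φ < θ + 2 * Real.pi) : Bzz (pol r θ) (pol ρ φ) = polarRect r ρ θ φ := by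
  obtain ⟨n, hn⟩ := theta_pol hr θ
  obtain ⟨m, hm⟩ := arg_pol hρ φ
  have h3 : angFrom (pol r θ) (pol ρ φ) = φ + n * (2 * Real.pi) := by
    unfold angFrom
    rw [toIcoMod_eq_iff, hn, hm]
    refine ⟨⟨by linarith, by linarith⟩, m - n, ?_⟩
    rw [zsmul_eq_mul]; push_cast; ring
  unfold Bzz
  rw [norm_pol hr.le, norm_pol hρ.le, h3, hn, polarRect_shift]

lemma Bp_area {r θ : ℝ} (hr : 0 < r) (hr1 : r < 1) :
    (dA (Bp r θ)).toReal = (1 - r) ^ 2 * (1 + 3 * r) / 8 := by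
  have hp := Real.pi_pos
  unfold Bp
  rw [polarRect_area hr (by linarith) (by nlinarith) (by nlinarith)]
  field_simp
  ring

lemma integrableOn_rect {f : ℂ → ℂ} (hf : LocallyIntegrableOn f unitDisc dA) {a b α β : ℝ}
    (ha : 0 < a) (hb : b < 1) (c : ℂ) :
    IntegrableOn (fun w => f w - c) (polarRect a b α β) dA := by
  refine Integrable.sub ?_ ?_
  · refine hf.integrableOn_compact_subset ?_ (polarRect_isCompact _ _ _ _)
    rintro w ⟨ρ, φ, h1, h2, h3, h4, rfl⟩
    change ‖pol ρ φ‖ < 1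
    rw [norm_pol (by linarith)]
    linarith
  · exact integrableOn_const dA_finite

/-- Estimate on arbitrary subrectangles. -/
lemma sub_est {f : ℂ → ℂ} (hf : LocallyIntegrableOn f unitDisc dA) {ε r θ : ℝ}
    (hr : 0 < r) (hr1 : r < 1) 
    (hV : ∀ ζ ∈ Bz (pol r θ), wQuot f (pol r θ) ζ ≤ ε) {a b α β : ℝ}
    (h1 : r ≤ a) (h2 : a ≤ b) (h3 : b ≤ 1 - (1 - r) / 2) (h4 : θ ≤ α) (h5 : α ≤ β)
    (h6 : β ≤ θ + Real.pi * (1 - r)) :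
    ‖∫ w in polarRect a b α β, (f w - avg f (pol r θ)) ∂dA‖ ≤
      4 * ε * (dA (Bp r θ)).toReal := by
  have hp := Real.pi_pos
  have hw : Real.pi * (1 - r) < 2 * Real.pi := by nlinarith
  have hA : 0 < (dA (Bp r θ)).toReal := by
    rw [Bp_area hr hr1]
    have : 0 < 1 - r := by linarith
    positivity
  set c := avg f (pol r θ)
  have key : ∀ ρ φ : ℝ, r ≤ ρ → ρ ≤ 1 - (1 - r) / 2 → θ ≤ φ → φ ≤ θ + Real.pi * (1 - r) →
      ‖∫ w in polarRect r ρ θ φ, (f w - c) ∂dA‖ ≤ ε * (dA (Bp r θ)).toReal := by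
    intro ρ φ g1 g2 g3 g4
    have hm : pol ρ φ ∈ Bz (pol r θ) := by
      rw [Bz_pol hr]; exact ⟨ρ, φ, g1, g2, g3, g4, rfl⟩
    have := hV _ hm
    unfold wQuot at this
    rw [Bz_pol hr, Bzz_pol hr (by linarith) g3 (by linarith)] at this
    rw [inv_mul_le_iff₀ hA] at this
    linarith
  have hi : ∀ x y u v : ℝ, 0 < x → y < 1 →
      IntegrableOn (fun w => f w - c) (polarRect x y u v) dA :=
    fun x y u v hx hy => integrableOn_rect hf hx hy c
  have e1 := int_split_r (a := r) (b := a) (c := b) (α := θ) (β := β) hr h1 h2 (by linarith)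
    (by linarith) (hi _ _ _ _ hr (by linarith))
  have e2 := int_split_r (a := r) (b := a) (c := b) (α := θ) (β := α) hr h1 h2 (by linarith)
    (by linarith) (hi _ _ _ _ hr (by linarith))
  have e3 := int_split_a (a := a) (b := b) (α := θ) (β := α) (γ := β) (by linarith) h2 h4 h5
    (by linarith) (hi _ _ _ _ (by linarith) (by linarith))
  have e4 : ∫ w in polarRect a b α β, (f w - c) ∂dA =
      ((∫ w in polarRect r b θ β, (f w - c) ∂dA) - ∫ w in polarRect r a θ β, (f w - c) ∂dA) -
      ((∫ w in polarRect r b θ α, (f w - c) ∂dA) - ∫ w in polarRect r a θ α, (f w - c) ∂dA) := by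
    rw [e1, e2, e3]; ring
  rw [e4]
  have k1 := key b β (by linarith) h3 (by linarith) h6
  have k2 := key a β (by linarith) (by linarith) (by linarith) h6
  have k3 := key b α (by linarith) h3 (by linarith) (by linarith)
  have k4 := key a α (by linarith) (by linarith) (by linarith) (by linarith)
  refine (norm_sub_le _ _).trans ?_
  have n5 := add_le_add (norm_sub_le (∫ w in polarRect r b θ β, (f w - c) ∂dA)
    (∫ w in polarRect r a θ β, (f w - c) ∂dA)) (norm_sub_le (∫ w in polarRect r b θ α, (f w - c) ∂dA)
    (∫ w in polarRect r a θ α, (f w - c) ∂dA))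
  refine n5.trans ?_
  linarith

/-- Single chain step. -/
lemma step_est {f : ℂ → ℂ} (hf : LocallyIntegrableOn f unitDisc dA) {ε r₀ : ℝ} (hr₀ : 1 / 2 ≤ r₀)
    (hε : 0 ≤ ε)
    (hV : ∀ z ∈ unitDisc, r₀ ≤ ‖z‖ → ∀ ζ ∈ Bz z, wQuot f z ζ ≤ ε) {r r' θ θ' : ℝ}
    (h0 : r₀ ≤ r) (h1 : r < 1) (h2 : r ≤ r') (h3 : 2 / 3 * (1 - r) ≤ 1 - r') (h4 : θ ≤ θ')
    (h5 : θ' ≤ θ + 2 / 3 * (Real.pi * (1 - r))) :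
    ‖avg f (pol r θ) - avg f (pol r' θ')‖ ≤ 144 * ε := by
  have hp := Real.pi_pos
  have hr : 0 < r := by linarith
  have hr' : 0 < r' := by linarith
  have hr1' : r' < 1 := by linarith
  have hpt : 0 < Real.pi * (1 - r) := mul_pos hp (by linarith)
  have hV1 : ∀ ζ ∈ Bz (pol r θ), wQuot f (pol r θ) ζ ≤ ε := by
    apply hV
    · change ‖pol r θ‖ < 1
      rwa [norm_pol hr.le]
    · rwa [norm_pol hr.le]
  have hV2 : ∀ ζ ∈ Bz (pol r' θ'), wQuot f (pol r' θ') ζ ≤ ε := by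
    apply hV
    · change ‖pol r' θ'‖ < 1
      rwa [norm_pol hr'.le]
    · rw [norm_pol hr'.le]; linarith
  have hpt' : 2 / 3 * (Real.pi * (1 - r)) ≤ Real.pi * (1 - r') := by nlinarith
  have a1 := sub_est hf hr h1 hV1 (a := r') (b := 1 - (1 - r) / 2) (α := θ')
    (β := θ' + Real.pi * (1 - r) / 3) h2 (by linarith) le_rfl h4 (by linarith) (by linarith)
  have a2 := sub_est hf hr' hr1' hV2 (a := r') (b := 1 - (1 - r) / 2) (α := θ')
    (β := θ' + Real.pi * (1 - r) / 3) le_rfl (by linarith) (by linarith) le_rfl (by linarith)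
    (by linarith)
  set c := avg f (pol r θ)
  set c' := avg f (pol r' θ')
  set R := polarRect r' (1 - (1 - r) / 2) θ' (θ' + Real.pi * (1 - r) / 3) with hR
  have hRa : (dA R).toReal = (1 - r) / 6 * ((1 - (1 - r) / 2) ^ 2 - r' ^ 2) := by
    rw [hR, polarRect_area hr' (by linarith) (by linarith) (by nlinarith)]
    field_simp
    ring
  have hRb : (1 - r) ^ 2 / 36 ≤ (dA R).toReal := by
    rw [hRa]
    have : (1 - r) / 6 ≤ (1 - (1 - r) / 2) ^ 2 - r' ^ 2 := by nlinarith
    nlinarith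
  have hB1 : (dA (Bp r θ)).toReal ≤ (1 - r) ^ 2 / 2 := by
    rw [Bp_area hr h1]; nlinarith [sq_nonneg (1 - r)]
  have hB2 : (dA (Bp r' θ')).toReal ≤ (1 - r) ^ 2 / 2 := by
    rw [Bp_area hr' hr1']
    have : (1 - r') ^ 2 ≤ (1 - r) ^ 2 := by nlinarith
    nlinarith [sq_nonneg (1 - r')]
  have hd : (∫ w in R, (f w - c') ∂dA) - (∫ w in R, (f w - c) ∂dA) =
      ((dA R).toReal : ℂ) * (c - c') := by
    rw [← integral_sub (integrableOn_rect hf hr' (by linarith) c')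
      (integrableOn_rect hf hr' (by linarith) c)]
    simp [Measure.real]
    exact Or.inl rfl
  have hn := norm_sub_le (∫ w in R, (f w - c') ∂dA) (∫ w in R, (f w - c) ∂dA)
  rw [hd, norm_mul, Complex.norm_real, Real.norm_of_nonneg ENNReal.toReal_nonneg] at hn
  have hsq : 0 < (1 - r) ^ 2 := by have : 0 < 1 - r := by linarith
                                   positivity
  have m1 : (1 - r) ^ 2 / 36 * ‖c - c'‖ ≤ (1 - r) ^ 2 / 36 * (144 * ε) := by
    calc (1 - r) ^ 2 / 36 * ‖c - c'‖ ≤ (dA R).toReal * ‖c - c'‖ := by gcongr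
      _ ≤ 4 * ε * (dA (Bp r' θ')).toReal + 4 * ε * (dA (Bp r θ)).toReal := by linarith
      _ ≤ 4 * ε * ((1 - r) ^ 2 / 2) + 4 * ε * ((1 - r) ^ 2 / 2) := by gcongr
      _ = _ := by ring
  exact le_of_mul_le_mul_left m1 (by positivity)

lemma avg_est {f : ℂ → ℂ} (hf : LocallyIntegrableOn f unitDisc dA) {ε r₀ : ℝ} (hr₀ : 1 / 2 ≤ r₀)
    (hε : 0 ≤ ε)
    (hV : ∀ z ∈ unitDisc, r₀ ≤ ‖z‖ → ∀ ζ ∈ Bz z, wQuot f z ζ ≤ ε) {r r' θ θ' : ℝ}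
    (h0 : r₀ ≤ r) (h1 : r < 1) (h2 : r ≤ r') (h3 : r' ≤ 1 - (1 - r) / 2) (h4 : θ ≤ θ')
    (h5 : θ' ≤ θ + Real.pi * (1 - r)) :
    ‖avg f (pol r θ) - avg f (pol r' θ')‖ ≤ 288 * ε := by
  have hp := Real.pi_pos
  have hpt : 0 < Real.pi * (1 - r) := mul_pos hp (by linarith)
  have hm : 3 / 4 * (Real.pi * (1 - r)) ≤ Real.pi * (1 - (r + r') / 2) := by nlinarith
  have s1 := step_est hf hr₀ hε hV (r := r) (r' := (r + r') / 2) (θ := θ) (θ' := (θ + θ') / 2)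
    h0 h1 (by linarith) (by linarith) (by linarith) (by linarith)
  have s2 := step_est hf hr₀ hε hV (r := (r + r') / 2) (r' := r') (θ := (θ + θ') / 2) (θ' := θ')
    (by linarith) (by linarith) (by linarith) (by linarith) (by linarith) (by linarith)
  have := norm_sub_le_norm_sub_add_norm_sub (avg f (pol r θ)) (avg f (pol ((r + r') / 2) ((θ + θ') / 2)))
    (avg f (pol r' θ'))
  linarith

/-- If a locally integrable `f` on `𝔻` satisfies the VWMO condition, then
`f - f̂` satisfies the vanishing averaging condition (4a):
`(1/|B(z)|) sup_{ζ∈B(z)} |∫_{B(z,ζ)} (f(ξ) - f̂(ξ)) dA(ξ)| → 0` as `|z| → 1`. -/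
theorem vwmo_sub_avg_vanishing_averaging (f : ℂ → ℂ)
    (hf : MeasureTheory.LocallyIntegrableOn f unitDisc dA) (hvwmo : IsVWMO f) :
    ∀ ε > (0:ℝ), ∃ r₀ < (1:ℝ), ∀ z ∈ unitDisc, r₀ ≤ ‖z‖ → ∀ ζ ∈ Bz z,
      ((dA (Bz z)).toReal)⁻¹ * ‖∫ ξ in Bzz z ζ, (f ξ - avg f ξ) ∂dA‖ ≤ ε := by
  intro ε hε
  obtain ⟨r₁, hr₁, hV⟩ := hvwmo (ε / 289) (by positivity)
  refine ⟨max r₁ (1 / 2), max_lt hr₁ (by norm_num), ?_⟩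
  have hV' : ∀ z ∈ unitDisc, max r₁ (1 / 2) ≤ ‖z‖ → ∀ ζ ∈ Bz z, wQuot f z ζ ≤ ε / 289 :=
    fun z hz hr => hV z hz ((le_max_left _ _).trans hr)
  have hhalf : (1 : ℝ) / 2 ≤ max r₁ (1 / 2) := le_max_right _ _
  intro z hz hrz ζ hζ
  have hw := hV' z hz hrz ζ hζ
  by_cases hint : IntegrableOn (fun ξ => f ξ - avg f ξ) (Bzz z ζ) dA
  swap
  · rw [integral_undef hint]; simpa using hε.le
  have hz1 : ‖z‖ < 1 := hz
  have hz0 : 0 < ‖z‖ := by linarith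
  have hp := Real.pi_pos
  obtain ⟨r, θ, hr, hzp⟩ : ∃ r θ : ℝ, r = ‖z‖ ∧ z = pol r θ :=
    ⟨‖z‖, theta z, rfl, (pol_theta z).symm⟩
  rw [← hr] at hz1 hz0 hrz
  subst hzp
  clear hr
  rw [Bz_pol hz0] at hζ
  obtain ⟨ρ, φ, g1, g2, g3, g4, hζe⟩ := hζ
  replace hζe : ζ = pol ρ φ := hζe
  subst hζe
  have hpt : Real.pi * (1 - r) < 2 * Real.pi := by nlinarith
  unfold wQuot at hw
  have hB : Bzz (pol r θ) (pol ρ φ) = polarRect r ρ θ φ :=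
    Bzz_pol hz0 (by linarith) g3 (by linarith)
  rw [hB] at hw hint ⊢
  rw [Bz_pol hz0] at hw ⊢
  have hA : 0 < (dA (Bp r θ)).toReal := by
    rw [Bp_area hz0 hz1]
    have : 0 < 1 - r := by linarith
    positivity
  rw [inv_mul_le_iff₀ hA] at hw ⊢
  have hi := integrableOn_rect hf hz0 (by linarith) (avg f (pol r θ)) (a := r) (b := ρ)
    (α := θ) (β := φ)
  have hbd : ‖∫ ξ in polarRect r ρ θ φ,
      ((f ξ - avg f ξ) - (f ξ - avg f (pol r θ))) ∂dA‖ ≤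
      288 * (ε / 289) * dA.real (polarRect r ρ θ φ) := by
    apply norm_setIntegral_le_of_norm_le_const dA_finite.lt_top
    rintro ξ ⟨ρ', φ', k1, k2, k3, k4, hξ⟩
    replace hξ : ξ = pol ρ' φ' := hξ
    subst hξ
    rw [sub_sub_sub_cancel_left]
    exact avg_est hf hhalf (by positivity) hV' hrz hz1 k1 (by linarith) k3 (by linarith)
  rw [integral_sub hint hi] at hbd
  have hmono : dA.real (polarRect r ρ θ φ) ≤ (dA (Bp r θ)).toReal :=
    ENNReal.toReal_mono dA_finite (measure_mono (polarRect_mono le_rfl g2 le_rfl g4))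
  have h9 : 288 * (ε / 289) * dA.real (polarRect r ρ θ φ) ≤
      288 * (ε / 289) * (dA (Bp r θ)).toReal := by gcongr
  have htri := norm_le_norm_sub_add (∫ ξ in polarRect r ρ θ φ, (f ξ - avg f ξ) ∂dA)
    (∫ ξ in polarRect r ρ θ φ, (f ξ - avg f (pol r θ)) ∂dA)
  calc _ ≤ _ := htri
    _ ≤ 288 * (ε / 289) * (dA (Bp r θ)).toReal + (dA (Bp r θ)).toReal * (ε / 289) := by linarith
    _ = _ := by ring
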